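/- arXiv:1201.3773 — 6 statements merged into one kernel-verified Lean document; each statement's English description precedes it below -/
import Mathlib

section
/- Let K be an abelian group, R a commutative K-graded ring without K-homogeneous zero divisors, and let R[T] carry the K-grading extending that of R obtained by assigning to T a degree w ∈ K. Then the following are equivalent: (1) every nonzero K-homogeneous element of R is a unit; (2) every ideal of R[T] generated by K-homogeneous elements is generated by a single K-homogeneous element f of the ideal whose polynomial degree deg(f) ∈ ℤ_{≥0} is minimal among polynomial degrees of nonzero K-homogeneous elements of the ideal. -/
/-!
For (1) ⇒ (2), the grading allows division with remainder. Inverses of homogeneous units are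
homogeneous (`exists_homogeneous_inverse`), so a nonzero homogeneous element of minimal polynomial
degree in the ideal can be scaled to a monic homogeneous `f`. Cancelling the leading term of a
homogeneous `g` against `f` keeps `g` homogeneous and lowers its degree, so every homogeneous
element of the ideal is a multiple of `f` (`mem_span_of_minimal_monic`).

For (2) ⇒ (1), given `r ≠ 0` homogeneous, the ideal `(r, T)` has a generator of degree at
most `deg r = 0`, hence a constant; since it divides `T`, it is a unit. Thus `(r, T) = R[T]`, and
reducing modulo `T` shows that `r` is a unit.
-/

/-! Definitions for factorially graded rings, following B. Bechtold,
"Factorially graded rings and Cox rings". -/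

section Defs

variable {K R : Type*} [CommRing R]

/-- An element is `K`-homogeneous w.r.t. the grading `𝒜` if it lies in some component. -/
def Homog (𝒜 : K → AddSubgroup R) (f : R) : Prop :=
  ∃ w, f ∈ 𝒜 w

/-- `R` has no `K`-homogeneous zero divisors: the product of two nonzero homogeneous
elements is nonzero. -/
def NoHomogZeroDivisors (𝒜 : K → AddSubgroup R) : Prop :=
  ∀ f g : R, Homog 𝒜 f → Homog 𝒜 g → f ≠ 0 → g ≠ 0 → f * g ≠ 0

/-- A nonzero homogeneous non-unit `f` is `K`-prime if whenever it divides a product of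
homogeneous elements, it divides one of the factors. -/
def KPrime (𝒜 : K → AddSubgroup R) (f : R) : Prop :=
  f ≠ 0 ∧ ¬IsUnit f ∧ Homog 𝒜 f ∧
    ∀ g h : R, Homog 𝒜 g → Homog 𝒜 h → f ∣ g * h → f ∣ g ∨ f ∣ h

/-- A nonzero homogeneous non-unit `f` is `K`-irreducible if in any factorization of `f`
into two homogeneous factors one of the factors is a unit. -/
def KIrreducible (𝒜 : K → AddSubgroup R) (f : R) : Prop :=
  f ≠ 0 ∧ ¬IsUnit f ∧ Homog 𝒜 f ∧
    ∀ g h : R, Homog 𝒜 g → Homog 𝒜 h → f = g * h → IsUnit g ∨ IsUnit h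

/-- `R` is factorially `K`-graded: every nonzero homogeneous non-unit is a product of
`K`-prime elements. -/
def FactoriallyGraded (𝒜 : K → AddSubgroup R) : Prop :=
  ∀ f : R, Homog 𝒜 f → f ≠ 0 → ¬IsUnit f →
    ∃ l : Multiset R, (∀ p ∈ l, KPrime 𝒜 p) ∧ l.prod = f

/-- `R` is `K`-noetherian: every ideal generated by homogeneous elements is generated by
finitely many homogeneous elements. -/
def KNoetherian (𝒜 : K → AddSubgroup R) : Prop :=
  ∀ s : Set R, (∀ x ∈ s, Homog 𝒜 x) →
    ∃ t : Finset R, (∀ x ∈ t, Homog 𝒜 x) ∧ Ideal.span (t : Set R) = Ideal.span s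

end Defs

section Graded

variable {K R : Type*} [AddCommGroup K] [CommRing R]

/-- The Veronese subalgebra `R_{K'} = ⊕_{w ∈ K'} R_w` (as an additive subgroup of `R`). -/
def Veronese (𝒜 : K → AddSubgroup R) (K' : AddSubgroup K) : AddSubgroup R :=
  ⨆ w ∈ K', 𝒜 w

/-- Homogeneous of some degree belonging to the subgroup `K'`. -/
def VHomog (𝒜 : K → AddSubgroup R) (K' : AddSubgroup K) (f : R) : Prop :=
  ∃ w ∈ K', f ∈ 𝒜 w

/-- Divisibility within a subset `V` of `R` (e.g. within a Veronese subring). -/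
def DvdIn (V : Set R) (f g : R) : Prop :=
  ∃ c ∈ V, g = f * c

/-- Being a unit within a subset `V` of `R` (e.g. within a Veronese subring). -/
def IsUnitIn (V : Set R) (f : R) : Prop :=
  ∃ c ∈ V, f * c = 1

/-- `f` is `K'`-prime in the Veronese subring `R_{K'}` with its `K'`-grading. -/
def VPrime (𝒜 : K → AddSubgroup R) (K' : AddSubgroup K) (f : R) : Prop :=
  f ≠ 0 ∧ ¬IsUnitIn (Veronese 𝒜 K' : Set R) f ∧ VHomog 𝒜 K' f ∧
    ∀ g h : R, VHomog 𝒜 K' g → VHomog 𝒜 K' h →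
      DvdIn (Veronese 𝒜 K' : Set R) f (g * h) →
        DvdIn (Veronese 𝒜 K' : Set R) f g ∨ DvdIn (Veronese 𝒜 K' : Set R) f h

/-- The Veronese subring `R_{K'}` is factorially `K'`-graded. -/
def VFactorial (𝒜 : K → AddSubgroup R) (K' : AddSubgroup K) : Prop :=
  ∀ f : R, VHomog 𝒜 K' f → f ≠ 0 → ¬IsUnitIn (Veronese 𝒜 K' : Set R) f →
    ∃ l : Multiset R, (∀ p ∈ l, VPrime 𝒜 K' p) ∧ l.prod = f

/-- `R` is `K'`-associated: every homogeneous element of `R` is a homogeneous unit times an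
element of the Veronese subalgebra `R_{K'}`. -/
def KAssociated (𝒜 : K → AddSubgroup R) (K' : AddSubgroup K) : Prop :=
  ∀ f : R, Homog 𝒜 f → ∃ u r : R, Homog 𝒜 u ∧ IsUnit u ∧ r ∈ Veronese 𝒜 K' ∧ f = u * r

/-- `ℬ` is the natural `K`-grading on the localization `R' = S⁻¹R`, i.e.
`(S⁻¹R)_w = { r/s : r ∈ R_{deg s + w} }`. -/
def LocGrading (𝒜 : K → AddSubgroup R) (S : Submonoid R) (R' : Type*) [CommRing R']
    [Algebra R R'] (ℬ : K → AddSubgroup R') : Prop :=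
  ∀ (w : K) (x : R'), x ∈ ℬ w ↔
    ∃ (r s : R) (v : K), s ∈ S ∧ s ∈ 𝒜 v ∧ r ∈ 𝒜 (v + w) ∧
      x * algebraMap R R' s = algebraMap R R' r

/-- The `K`-grading on the polynomial ring `R[T]` extending `𝒜`, in which `T` is
homogeneous of degree `w`: the degree-`d` part is spanned by the monomials `a·Tⁿ`
with `a ∈ R_{d - n·w}`. -/
def polyGrading (𝒜 : K → AddSubgroup R) (w : K) : K → AddSubgroup (Polynomial R) :=
  fun d =>
    { carrier := { f : Polynomial R | ∀ n : ℕ, f.coeff n ∈ 𝒜 (d - n • w) }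
      zero_mem' := by
        intro n
        rw [Polynomial.coeff_zero]
        exact zero_mem _
      add_mem' := by
        intro f g hf hg n
        rw [Polynomial.coeff_add]
        exact add_mem (hf n) (hg n)
      neg_mem' := by
        intro f hf n
        rw [Polynomial.coeff_neg]
        exact neg_mem (hf n) }

/-- The coarsened `K`-grading associated with a `K ⊕ ℤᵐ`-grading (or any grading by a
product group): the component of degree `w ∈ K` is `⊕_v R_{(w,v)}`. -/
def coarsen {V : Type*} (𝒜 : K × V → AddSubgroup R) : K → AddSubgroup R :=
  fun w => ⨆ v : V, 𝒜 (w, v)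

end Graded

open Polynomial

lemma C_mul_X_pow_mem_polyGrading {K R : Type*} [AddCommGroup K] [CommRing R]
    (𝒜 : K → AddSubgroup R) {w e : K} {a : R} (ha : a ∈ 𝒜 e) (k : ℕ) :
    C a * X ^ k ∈ polyGrading 𝒜 w (e + k • w) := by
  intro n
  rw [coeff_C_mul_X_pow]
  split_ifs with h
  · subst h
    simpa using ha
  · exact zero_mem _

section Helpers

variable {K R : Type*} [AddCommGroup K] [DecidableEq K] [CommRing R]
  (𝒜 : K → AddSubgroup R) [GradedRing 𝒜]

lemma mul_mem_polyGrading {w d e : K} {f g : R[X]} (hf : f ∈ polyGrading 𝒜 w d)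
    (hg : g ∈ polyGrading 𝒜 w e) : f * g ∈ polyGrading 𝒜 w (d + e) := by
  intro n
  rw [coeff_mul]
  refine sum_mem fun p hp => ?_
  have hpn : p.1 + p.2 = n := Finset.HasAntidiagonal.mem_antidiagonal.mp hp
  have h := SetLike.mul_mem_graded (hf p.1) (hg p.2)
  have hd : d - p.1 • w + (e - p.2 • w) = d + e - n • w := by
    rw [← hpn, add_smul]; abel
  rwa [hd] at h

/-- The degree `-v` component of an inverse of a unit of degree `v` is itself an inverse. -/
lemma exists_homogeneous_inverse {v : K} {u : R} (hu : u ∈ 𝒜 v) (hunit : IsUnit u) :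
    ∃ c ∈ 𝒜 (-v), c * u = 1 := by
  obtain ⟨b, hb⟩ := hunit.exists_right_inv
  refine ⟨DirectSum.decompose 𝒜 b (-v), SetLike.coe_mem _, ?_⟩
  have h := DirectSum.coe_decompose_mul_add_of_left_mem 𝒜 (i := v) (j := -v) (b := b) hu
  rw [hb, add_neg_cancel, DirectSum.decompose_of_mem_same 𝒜 SetLike.GradedOne.one_mem] at h
  rw [mul_comm, ← h]

/-- Graded division with remainder, by induction on a degree bound for `g`: cancelling the leading
term of `g` leaves a homogeneous element of `I` of smaller degree. The grading degree of `f` is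
`deg f • w` because its leading coefficient `1` has degree `0`. -/
lemma mem_span_of_minimal_monic {w : K} {I : Ideal R[X]} {f : R[X]} (hfI : f ∈ I)
    (hf : f ∈ polyGrading 𝒜 w (f.natDegree • w)) (hmonic : f.Monic)
    (hmin : ∀ g ∈ I, Homog (polyGrading 𝒜 w) g → g ≠ 0 → f.natDegree ≤ g.natDegree)
    (n : ℕ) (g : R[X]) (hgI : g ∈ I) (hg : Homog (polyGrading 𝒜 w) g) (hn : g.degree < n) :
    g ∈ Ideal.span {f} := by
  induction n generalizing g with
  | zero =>
    have h0 : g = 0 := by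
      rw [← degree_eq_bot]
      exact Nat.WithBot.lt_zero_iff.mp (by simpa using hn)
    rw [h0]
    exact zero_mem _
  | succ n ih =>
    by_cases h0 : g = 0
    · rw [h0]
      exact zero_mem _
    have hle := hmin g hgI hg h0
    obtain ⟨e, he⟩ := hg
    have hdeg : f.degree ≤ g.degree := by
      rw [degree_eq_natDegree h0]
      exact natDegree_le_iff_degree_le.mp hle
    have hlt := div_wf_lemma ⟨hdeg, h0⟩ hmonic
    set q : R[X] := C g.leadingCoeff * X ^ (g.natDegree - f.natDegree) with hq
    have hqf : f * q ∈ polyGrading 𝒜 w e := by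
      have h := mul_mem_polyGrading 𝒜 hf
        (C_mul_X_pow_mem_polyGrading 𝒜 (w := w) (he g.natDegree) (g.natDegree - f.natDegree))
      have hd : f.natDegree • w +
          (e - g.natDegree • w + (g.natDegree - f.natDegree) • w) = e := by
        have hsplit : g.natDegree • w =
            f.natDegree • w + (g.natDegree - f.natDegree) • w := by
          rw [← add_smul, Nat.add_sub_cancel' hle]
        rw [hsplit]
        abel
      rwa [hd] at h
    have hmem : g - f * q ∈ Ideal.span {f} := by
      refine ih _ (I.sub_mem hgI (I.mul_mem_right _ hfI)) ⟨e, sub_mem he hqf⟩ ?_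
      refine hlt.trans_le ?_
      rw [degree_eq_natDegree h0] at hn ⊢
      exact_mod_cast Nat.lt_succ_iff.mp (by exact_mod_cast hn)
    have h := (Ideal.span {f}).add_mem hmem
      (Ideal.mul_mem_right q _ (Ideal.mem_span_singleton_self f))
    rwa [sub_add_cancel] at h

end Helpers

/-- Proposition 3.2. Let `R` be `K`-graded without homogeneous zero
divisors and grade `R[T]` by assigning to `T` the degree `w`. Then every nonzero
homogeneous element of `R` is a unit iff every ideal of `R[T]` generated by homogeneous
elements is generated by a single homogeneous element of the ideal of minimal polynomial
degree among the nonzero homogeneous elements of the ideal. -/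
theorem statement_13 {K R : Type*} [AddCommGroup K] [DecidableEq K] [CommRing R]
    (𝒜 : K → AddSubgroup R) [GradedRing 𝒜]
    (hzd : NoHomogZeroDivisors 𝒜) (w : K) :
    (∀ r : R, Homog 𝒜 r → r ≠ 0 → IsUnit r) ↔
      (∀ s : Set (Polynomial R), (∀ x ∈ s, Homog (polyGrading 𝒜 w) x) →
        ∃ f : Polynomial R, f ∈ Ideal.span s ∧ Homog (polyGrading 𝒜 w) f ∧
          Ideal.span s = Ideal.span {f} ∧
          ∀ g ∈ Ideal.span s, Homog (polyGrading 𝒜 w) g → g ≠ 0 →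
            f.natDegree ≤ g.natDegree) := by
  constructor
  · intro hunit s hs
    by_cases hzero : ∀ x ∈ s, x = 0
    · have hspan : Ideal.span s = ⊥ := Ideal.span_eq_bot.mpr hzero
      refine ⟨0, zero_mem _, ⟨0, zero_mem _⟩, ?_, fun g _ _ _ => by simp⟩
      rw [hspan, Ideal.span_singleton_zero]
    push Not at hzero
    obtain ⟨x, hxs, hx0⟩ := hzero
    obtain ⟨f, ⟨hfI, ⟨d, hf⟩, hf0⟩, hmin⟩ := exists_minimalFor_of_wellFoundedLT
      (fun g : R[X] => g ∈ Ideal.span s ∧ Homog (polyGrading 𝒜 w) g ∧ g ≠ 0) natDegree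
      ⟨x, Ideal.subset_span hxs, hs x hxs, hx0⟩
    have hmin' : ∀ g ∈ Ideal.span s, Homog (polyGrading 𝒜 w) g → g ≠ 0 →
        f.natDegree ≤ g.natDegree := fun g hgI hg hg0 =>
      (le_total f.natDegree g.natDegree).elim id fun h => hmin ⟨hgI, hg, hg0⟩ h
    obtain ⟨c, hc, hcf⟩ := exists_homogeneous_inverse 𝒜 (hf f.natDegree)
      (hunit _ ⟨_, hf f.natDegree⟩ (leadingCoeff_ne_zero.mpr hf0))
    have hle : (C c * f).natDegree ≤ f.natDegree := natDegree_C_mul_le c f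
    have hmonic : (C c * f).Monic :=
      monic_of_natDegree_le_of_coeff_eq_one _ hle (by rw [coeff_C_mul, hcf])
    have hI : C c * f ∈ Ideal.span s := Ideal.mul_mem_left _ _ hfI
    have hhom : C c * f ∈ polyGrading 𝒜 w (f.natDegree • w) := by
      have h := mul_mem_polyGrading 𝒜 (C_mul_X_pow_mem_polyGrading 𝒜 (w := w) hc 0) hf
      simpa using h
    have : Nontrivial R := ⟨_, _, leadingCoeff_ne_zero.mpr hf0⟩
    have hnat : (C c * f).natDegree = f.natDegree :=
      le_antisymm hle (hmin' _ hI ⟨_, hhom⟩ hmonic.ne_zero)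
    rw [← hnat] at hhom
    have hminc : ∀ g ∈ Ideal.span s, Homog (polyGrading 𝒜 w) g → g ≠ 0 →
        (C c * f).natDegree ≤ g.natDegree := fun g hgI hg hg0 =>
      hle.trans (hmin' g hgI hg hg0)
    refine ⟨C c * f, hI, ⟨_, hhom⟩, le_antisymm ?_ ?_, hminc⟩
    · refine Ideal.span_le.mpr fun g hg => ?_
      refine mem_span_of_minimal_monic 𝒜 hI hhom hmonic hminc (g.natDegree + 1) g
        (Ideal.subset_span hg) (hs g hg) ?_
      exact degree_le_natDegree.trans_lt (by exact_mod_cast Nat.lt_succ_self _)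
    · exact (Ideal.span_singleton_le_iff_mem _).mpr hI
  · rintro h r ⟨v, hr⟩ hr0
    have hCr : Homog (polyGrading 𝒜 w) (C r) :=
      ⟨_, by simpa using C_mul_X_pow_mem_polyGrading 𝒜 (w := w) hr 0⟩
    have hX : Homog (polyGrading 𝒜 w) X :=
      ⟨_, by
        simpa using C_mul_X_pow_mem_polyGrading 𝒜 (w := w)
          (SetLike.GradedOne.one_mem (A := 𝒜)) 1⟩
    obtain ⟨f, -, -, hspan, hmin⟩ := h {C r, X} (by
      rintro x (rfl | rfl)
      exacts [hCr, hX])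
    have hdeg := hmin (C r) (Ideal.subset_span (by simp)) hCr (C_ne_zero.mpr hr0)
    rw [natDegree_C, Nat.le_zero] at hdeg
    rw [eq_C_of_natDegree_eq_zero hdeg] at hspan
    -- Comparing coefficients of `T` in `T = f * g` shows that the constant `f` is a unit.
    have hXmem : (X : R[X]) ∈ Ideal.span {C (f.coeff 0)} := by
      rw [← hspan]
      exact Ideal.subset_span (by simp)
    obtain ⟨g, hg⟩ := Ideal.mem_span_singleton.mp hXmem
    have hunit : IsUnit (f.coeff 0) := by
      have h1 := congrArg (fun p : R[X] => p.coeff 1) hg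
      simp only [coeff_X_one, coeff_C_mul] at h1
      exact IsUnit.of_mul_eq_one _ h1.symm
    have hone : (1 : R[X]) ∈ Ideal.span {C r, X} := by
      rw [hspan, Ideal.span_singleton_eq_top.mpr (hunit.map C)]
      trivial
    obtain ⟨p, q, hpq⟩ := Ideal.mem_span_pair.mp hone
    have h0 := congrArg (fun p : R[X] => p.coeff 0) hpq
    simp only [coeff_add, coeff_mul_C, coeff_mul_X_zero, add_zero, coeff_one_zero] at h0
    exact IsUnit.of_mul_eq_one_right _ h0
end

section
/- Let K be an abelian group and R a commutative K-graded ring without K-homogeneous zero divisors such that every ideal of R generated by K-homogeneous elements is generated by a single K-homogeneous element. Then R is factorially K-graded. -/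
section Helpers

variable {K R : Type*} [AddCommGroup K] [DecidableEq K] [CommRing R]
  {𝒜 : K → AddSubgroup R} [GradedRing 𝒜]

/-- The annihilator of a nonzero homogeneous element vanishes, also in non-homogeneous
elements, because multiplication by `f` only shifts homogeneous components. -/
lemma eq_zero_of_homog_mul_eq_zero (hzd : NoHomogZeroDivisors 𝒜) {f x : R}
    (hf : Homog 𝒜 f) (hf0 : f ≠ 0) (h : f * x = 0) : x = 0 := by
  obtain ⟨v, hv⟩ := hf
  have hcomp : ∀ w, (DirectSum.decompose 𝒜 x w : R) = 0 := by
    intro w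
    by_contra hne
    refine hzd f _ ⟨v, hv⟩ ⟨w, SetLike.coe_mem _⟩ hf0 hne ?_
    rw [← DirectSum.coe_decompose_mul_add_of_left_mem 𝒜 hv, h]
    simp
  classical
  rw [← DirectSum.sum_support_decompose 𝒜 x]
  exact Finset.sum_eq_zero fun w _ => hcomp w

lemma exists_homog_quotient {f g : R} (hf : Homog 𝒜 f) (hg : Homog 𝒜 g) (h : f ∣ g) :
    ∃ c, Homog 𝒜 c ∧ g = f * c := by
  obtain ⟨v, hv⟩ := hf
  obtain ⟨w, hw⟩ := hg
  obtain ⟨c, hc⟩ := h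
  refine ⟨DirectSum.decompose 𝒜 c (w - v), ⟨w - v, SetLike.coe_mem _⟩, ?_⟩
  rw [← DirectSum.coe_decompose_mul_add_of_left_mem 𝒜 hv, ← hc, add_sub_cancel,
    DirectSum.decompose_of_mem_same 𝒜 hw]

/-- A nonzero homogeneous product does not divide one factor if the other is a non-unit. -/
lemma not_mul_dvd_left (hzd : NoHomogZeroDivisors 𝒜) {g h : R}
    (hg : Homog 𝒜 g) (hg0 : g ≠ 0) (hh : ¬IsUnit h) : ¬g * h ∣ g := by
  rintro ⟨c, hc⟩
  have h0 : 1 - h * c = 0 := eq_zero_of_homog_mul_eq_zero hzd hg hg0 (by linear_combination hc)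
  exact hh (IsUnit.of_mul_eq_one c (sub_eq_zero.mp h0).symm)

/-- `a` and `b` are homogeneous, and `a` divides `b` but is not divisible by it. -/
def HomogStrictDvd {K R : Type*} [CommRing R] (𝒜 : K → AddSubgroup R) (a b : R) : Prop :=
  Homog 𝒜 a ∧ Homog 𝒜 b ∧ a ∣ b ∧ ¬b ∣ a

lemma wellFounded_homogStrictDvd {K R : Type*} [CommRing R] {𝒜 : K → AddSubgroup R}
    (hprinc : ∀ s : Set R, (∀ x ∈ s, Homog 𝒜 x) →
      ∃ f : R, Homog 𝒜 f ∧ Ideal.span s = Ideal.span {f}) :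
    WellFounded (HomogStrictDvd 𝒜) := by
  rw [wellFounded_iff_isEmpty_descending_chain]
  refine ⟨fun ⟨f, hf⟩ => ?_⟩
  obtain ⟨g, -, hg⟩ := hprinc (Set.range f) (by rintro _ ⟨n, rfl⟩; exact (hf n).2.1)
  have hmono : Monotone fun n => Ideal.span {f n} :=
    monotone_nat_of_le_succ fun n => Ideal.span_singleton_le_span_singleton.mpr (hf n).2.2.1
  have hunion : Ideal.span (Set.range f) = ⨆ n, Ideal.span {f n} := by
    rw [← Set.iUnion_singleton_eq_range, Ideal.span_iUnion]
  have hmem : g ∈ ⨆ n, Ideal.span {f n} := by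
    rw [← hunion, hg]
    exact Ideal.mem_span_singleton_self g
  obtain ⟨N, hN⟩ := (Submodule.mem_iSup_of_directed _ hmono.directed_le).mp hmem
  have hdvd : g ∣ f (N + 1) := by
    rw [← Ideal.mem_span_singleton, ← hg]
    exact Ideal.subset_span ⟨N + 1, rfl⟩
  exact (hf N).2.2.2 ((Ideal.mem_span_singleton.mp hN).trans hdvd)

lemma KIrreducible.kPrime
    (hprinc : ∀ s : Set R, (∀ x ∈ s, Homog 𝒜 x) →
      ∃ f : R, Homog 𝒜 f ∧ Ideal.span s = Ideal.span {f})
    {f : R} (hf : KIrreducible 𝒜 f) : KPrime 𝒜 f := by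
  obtain ⟨hf0, hfu, hfh, hirr⟩ := hf
  refine ⟨hf0, hfu, hfh, fun g h hg hh hdvd => ?_⟩
  obtain ⟨d, hd, hspan⟩ := hprinc {f, g} (by rintro x (rfl | rfl) <;> assumption)
  have hdf : d ∣ f := by
    rw [← Ideal.mem_span_singleton, ← hspan]
    exact Ideal.subset_span (by simp)
  have hdg : d ∣ g := by
    rw [← Ideal.mem_span_singleton, ← hspan]
    exact Ideal.subset_span (by simp)
  obtain ⟨c, hc, hfc⟩ := exists_homog_quotient hd hfh hdf
  rcases hirr d c hd hc hfc with hu | hu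
  · right
    have h1 : (1 : R) ∈ Ideal.span {f, g} := by
      rw [hspan, Ideal.mem_span_singleton]
      exact hu.dvd
    obtain ⟨a, b, hab⟩ := Ideal.mem_span_pair.mp h1
    have hh' : h = f * (a * h) + b * (g * h) := by linear_combination -h * hab
    rw [hh']
    exact dvd_add (dvd_mul_right _ _) (hdvd.mul_left b)
  · left
    rw [hfc]
    exact hu.mul_right_dvd.mpr hdg

end Helpers

/-- Proposition 3.3. A `K`-graded ring without homogeneous zero divisors
in which every ideal generated by homogeneous elements is generated by a single
homogeneous element is factorially `K`-graded. -/
theorem statement_15 {K R : Type*} [AddCommGroup K] [DecidableEq K] [CommRing R]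
    (𝒜 : K → AddSubgroup R) [GradedRing 𝒜]
    (hzd : NoHomogZeroDivisors 𝒜)
    (hprinc : ∀ s : Set R, (∀ x ∈ s, Homog 𝒜 x) →
      ∃ f : R, Homog 𝒜 f ∧ Ideal.span s = Ideal.span {f}) :
    FactoriallyGraded 𝒜 := by
  intro f
  induction f using (wellFounded_homogStrictDvd hprinc).induction with
  | _ f ih =>
    intro hf hf0 hfu
    by_cases hirr : KIrreducible 𝒜 f
    · exact ⟨{f}, by simpa using hirr.kPrime hprinc, by simp⟩
    · have hfac : ∃ g h, Homog 𝒜 g ∧ Homog 𝒜 h ∧ f = g * h ∧ ¬IsUnit g ∧ ¬IsUnit h := by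
        by_contra! hno
        exact hirr ⟨hf0, hfu, hf, fun g h hg hh hgh => by
          by_cases hu : IsUnit g
          · exact Or.inl hu
          · exact Or.inr (hno g h hg hh hgh hu)⟩
      obtain ⟨g, h, hg, hh, rfl, hgu, hhu⟩ := hfac
      have hg0 : g ≠ 0 := left_ne_zero_of_mul hf0
      have hh0 : h ≠ 0 := right_ne_zero_of_mul hf0
      obtain ⟨l, hl, hlg⟩ := ih g
        ⟨hg, hf, dvd_mul_right _ _, not_mul_dvd_left hzd hg hg0 hhu⟩ hg hg0 hgu
      obtain ⟨m, hm, hmh⟩ := ih h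
        ⟨hh, hf, dvd_mul_left _ _, mul_comm g h ▸ not_mul_dvd_left hzd hh hh0 hgu⟩ hh hh0 hhu
      refine ⟨l + m, fun p hp => ?_, by rw [Multiset.prod_add, hlg, hmh]⟩
      exact (Multiset.mem_add.mp hp).elim (hl p) (hm p)
end

section
/- Let K be an abelian group, R a commutative K-graded ring without K-homogeneous zero divisors, and let R[T] carry the K-grading extending that of R obtained by assigning to T a degree w ∈ K. Let S = R⁺ \ {0} be the multiplicative system of all nonzero K-homogeneous elements of R. Then the K-graded localization S^{-1}(R[T]) is factorially K-graded. -/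
/-! ### Homogeneous polynomials and pseudo-division -/

section Helpers

open Polynomial

variable {K R : Type*} [AddCommGroup K] [CommRing R]

/-- In a graded ring without homogeneous zero divisors, a nonzero homogeneous element is not
annihilated by any nonzero element, homogeneous or not. -/
lemma homog_mul_eq_zero [DecidableEq K] {𝒜 : K → AddSubgroup R} [GradedRing 𝒜]
    (hzd : NoHomogZeroDivisors 𝒜) {a : R} (ha : Homog 𝒜 a) (ha0 : a ≠ 0) {b : R}
    (h : a * b = 0) : b = 0 := by
  obtain ⟨i, hi⟩ := ha
  have key : ∀ j, (DirectSum.decompose 𝒜 b j : R) = 0 := by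
    intro j
    have h1 := DirectSum.coe_decompose_mul_add_of_left_mem 𝒜 (i := i) (j := j) (b := b) hi
    rw [h, DirectSum.decompose_zero] at h1
    by_contra hne
    exact hzd a _ ⟨i, hi⟩ ⟨j, (DirectSum.decompose 𝒜 b j).2⟩ ha0 hne (by simpa using h1.symm)
  apply (DirectSum.decompose 𝒜).injective
  ext j
  simp [key j]

lemma monomial_mem {𝒜 : K → AddSubgroup R} {w d : K} {a : R} {n : ℕ}
    (ha : a ∈ 𝒜 (d - n • w)) : monomial n a ∈ polyGrading 𝒜 w d := by
  intro m
  rw [coeff_monomial]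
  split_ifs with h
  · rwa [← h]
  · exact zero_mem _

lemma C_mem {𝒜 : K → AddSubgroup R} {w d : K} {a : R}
    (ha : a ∈ 𝒜 d) : C a ∈ polyGrading 𝒜 w d :=
  monomial_mem (n := 0) (by simpa using ha)

lemma poly_mul_mem [DecidableEq K] {𝒜 : K → AddSubgroup R} [GradedRing 𝒜] {w d e : K} {f g : R[X]}
    (hf : f ∈ polyGrading 𝒜 w d) (hg : g ∈ polyGrading 𝒜 w e) :
    f * g ∈ polyGrading 𝒜 w (d + e) := by
  intro n
  rw [coeff_mul]
  refine sum_mem fun x hx => ?_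
  have h := SetLike.mul_mem_graded (hf x.1) (hg x.2)
  rw [Finset.HasAntidiagonal.mem_antidiagonal] at hx
  have e1 : d - x.1 • w + (e - x.2 • w) = d + e - n • w := by
    rw [← hx, add_smul]; abel
  rwa [e1] at h

lemma homog_mul [DecidableEq K] {𝒜 : K → AddSubgroup R} [GradedRing 𝒜] {a b : R}
    (ha : Homog 𝒜 a) (hb : Homog 𝒜 b) : Homog 𝒜 (a * b) := by
  obtain ⟨i, hi⟩ := ha
  obtain ⟨j, hj⟩ := hb
  exact ⟨_, SetLike.mul_mem_graded hi hj⟩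

lemma homog_leadingCoeff {𝒜 : K → AddSubgroup R} {w : K} {f : R[X]}
    (hf : Homog (polyGrading 𝒜 w) f) : Homog 𝒜 f.leadingCoeff := by
  obtain ⟨d, hd⟩ := hf
  exact ⟨_, hd _⟩

/-- A nonzero homogeneous `f` has a leading coefficient that is not a zero divisor; the other
factor need not be homogeneous. -/
lemma leadingCoeff_mul_ne_zero [DecidableEq K] {𝒜 : K → AddSubgroup R} [GradedRing 𝒜]
    (hzd : NoHomogZeroDivisors 𝒜) {w : K} {f g : R[X]} (hf : Homog (polyGrading 𝒜 w) f)
    (hf0 : f ≠ 0) (hg0 : g ≠ 0) : f.leadingCoeff * g.leadingCoeff ≠ 0 := fun h =>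
  hg0 (leadingCoeff_eq_zero.1
    (homog_mul_eq_zero hzd (homog_leadingCoeff hf) (leadingCoeff_ne_zero.2 hf0) h))

lemma poly_mul_ne_zero [DecidableEq K] {𝒜 : K → AddSubgroup R} [GradedRing 𝒜]
    (hzd : NoHomogZeroDivisors 𝒜) {w : K} {f g : R[X]} (hf : Homog (polyGrading 𝒜 w) f)
    (hf0 : f ≠ 0) (hg0 : g ≠ 0) : f * g ≠ 0 := by
  intro h
  have h1 := leadingCoeff_mul' (leadingCoeff_mul_ne_zero hzd hf hf0 hg0)
  rw [h, leadingCoeff_zero] at h1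
  exact leadingCoeff_mul_ne_zero hzd hf hf0 hg0 h1.symm

/-- Pseudo-division of a homogeneous polynomial `g` by a nonzero homogeneous polynomial `f`. The
constant `c` is a power of the leading coefficient of `f`, and the degrees in `K` are tracked so
that sums of quotients stay homogeneous along the induction. -/
lemma exists_pseudo_division [DecidableEq K] {𝒜 : K → AddSubgroup R} [GradedRing 𝒜]
    (hzd : NoHomogZeroDivisors 𝒜) {w d₁ : K} {f : R[X]} (hf : f ∈ polyGrading 𝒜 w d₁)
    (hf0 : f ≠ 0) (N : ℕ) :
    ∀ (d : K) (g : R[X]), g ∈ polyGrading 𝒜 w d → g.degree < N →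
      ∃ (e : K) (c : R) (q r : R[X]), c ∈ 𝒜 e ∧ c ≠ 0 ∧ q ∈ polyGrading 𝒜 w (e + d - d₁) ∧
        r ∈ polyGrading 𝒜 w (e + d) ∧ C c * g = q * f + r ∧ r.degree < f.degree := by
  have h10 : (1 : R) ≠ 0 := by
    intro h
    exact hf0 (by rw [← one_mul f, ← C_1, h, C_0, zero_mul])
  induction N with
  | zero =>
    intro d g hg hN
    have hg0 : g = 0 := by
      rw [← degree_eq_bot, ← Nat.WithBot.lt_zero_iff]
      exact_mod_cast hN
    refine ⟨0, 1, 0, 0, SetLike.GradedOne.one_mem, h10, zero_mem _, zero_mem _, by simp [hg0], ?_⟩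
    rw [degree_zero]
    exact bot_lt_iff_ne_bot.2 (degree_ne_bot.2 hf0)
  | succ N ih =>
    intro d g hg hN
    by_cases hlt : g.degree < f.degree
    · exact ⟨0, 1, 0, g, SetLike.GradedOne.one_mem, h10, zero_mem _, by simpa using hg,
        by simp, hlt⟩
    have hle : f.degree ≤ g.degree := not_lt.1 hlt
    have hg0 : g ≠ 0 := by
      rintro rfl
      exact hf0 (by simpa using hle)
    set m := f.natDegree with hm
    set n := g.natDegree with hn
    have hmn : m ≤ n := natDegree_le_natDegree hle
    set a := f.leadingCoeff with ha
    set b := g.leadingCoeff with hb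
    have ha0 : a ≠ 0 := leadingCoeff_ne_zero.2 hf0
    have hb0 : b ≠ 0 := leadingCoeff_ne_zero.2 hg0
    have haA : a ∈ 𝒜 (d₁ - m • w) := hf m
    have hbA : b ∈ 𝒜 (d - n • w) := hg n
    have hab : a * b ≠ 0 := leadingCoeff_mul_ne_zero hzd ⟨d₁, hf⟩ hf0 hg0
    have hM : monomial (n - m) b ∈ polyGrading 𝒜 w (d - m • w) := by
      apply monomial_mem
      have e1 : d - m • w - (n - m) • w = d - n • w := by
        conv_rhs => rw [← Nat.add_sub_of_le hmn, add_smul]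
        abel
      rwa [e1]
    have hM0 : monomial (n - m) b ≠ 0 := by simpa using hb0
    have hg1 : C a * g - monomial (n - m) b * f ∈ polyGrading 𝒜 w (d₁ - m • w + d) := by
      refine sub_mem (poly_mul_mem (C_mem haA) hg) ?_
      have h := poly_mul_mem hM hf
      have e1 : d - m • w + d₁ = d₁ - m • w + d := by abel
      rwa [e1] at h
    have hlc1 : (C a).leadingCoeff * g.leadingCoeff ≠ 0 := by simpa using hab
    have hlc2 : (monomial (n - m) b).leadingCoeff * f.leadingCoeff ≠ 0 := by
      rw [leadingCoeff_monomial, mul_comm]; exact hab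
    have hdeg1 : (C a * g).degree = n := by
      rw [degree_mul' hlc1, degree_C ha0, zero_add, degree_eq_natDegree hg0]
    have hdeg2 : (monomial (n - m) b * f).degree = n := by
      rw [degree_mul' hlc2, degree_monomial _ hb0, degree_eq_natDegree hf0]
      rw [← Nat.cast_add, ← hm, Nat.sub_add_cancel hmn]
    have hdrop : (C a * g - monomial (n - m) b * f).degree < (n : WithBot ℕ) := by
      rw [← hdeg1]
      apply degree_sub_lt_left (hdeg1.trans hdeg2.symm)
      · intro h
        rw [h] at hdeg1
        simp at hdeg1
      · rw [leadingCoeff_mul' hlc1, leadingCoeff_mul' hlc2, leadingCoeff_C, leadingCoeff_monomial,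
          mul_comm]
    have hnN : n ≤ N := by
      rw [degree_eq_natDegree hg0] at hN
      exact Nat.lt_succ_iff.1 (by exact_mod_cast hN)
    obtain ⟨e, c, q, r, hc, hc0, hq, hr, heq, hrd⟩ :=
      ih _ _ hg1 (hdrop.trans_le (by exact_mod_cast hnN))
    refine ⟨e + (d₁ - m • w), c * a, q + C c * monomial (n - m) b, r,
      SetLike.mul_mem_graded hc haA, hzd _ _ ⟨_, hc⟩ ⟨_, haA⟩ hc0 ha0, ?_, ?_, ?_, hrd⟩
    · refine add_mem ?_ ?_
      · rwa [add_assoc]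
      · have h := poly_mul_mem (C_mem (w := w) hc) hM
        have e1 : e + (d - m • w) = e + (d₁ - m • w) + d - d₁ := by abel
        rwa [e1] at h
    · rwa [add_assoc]
    · rw [C_mul]
      linear_combination heq

end Helpers

/-! ### Homogeneous elements of the localization -/

set_option linter.unusedSectionVars false

section Localized

open Polynomial

variable {K R : Type*} [AddCommGroup K] [DecidableEq K] [CommRing R]
  {𝒜 : K → AddSubgroup R} [GradedRing 𝒜] {w : K} {S : Submonoid R[X]}
  {R' : Type*} [CommRing R'] [Algebra R[X] R'] [IsLocalization S R'] {ℬ : K → AddSubgroup R'}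

lemma algebraMap_inj (hzd : NoHomogZeroDivisors 𝒜)
    (hS : ∀ x : R[X], x ∈ S ↔ ∃ r : R, Homog 𝒜 r ∧ r ≠ 0 ∧ x = C r) :
    Function.Injective (algebraMap R[X] R') := by
  apply IsLocalization.injective R' (M := S)
  intro x hx
  obtain ⟨r, hr, hr0, rfl⟩ := (hS x).1 hx
  rw [mem_nonZeroDivisors_iff_right]
  intro p hp
  ext n
  have h := congrArg (fun q => q.coeff n) hp
  simp only [coeff_mul_C, coeff_zero] at h
  rw [mul_comm] at h
  exact homog_mul_eq_zero hzd hr hr0 h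

lemma isUnit_const
    (hS : ∀ x : R[X], x ∈ S ↔ ∃ r : R, Homog 𝒜 r ∧ r ≠ 0 ∧ x = C r)
    {a : R} (ha : Homog 𝒜 a) (ha0 : a ≠ 0) : IsUnit (algebraMap R[X] R' (C a)) :=
  IsLocalization.map_units R' (⟨C a, (hS _).2 ⟨a, ha, ha0, rfl⟩⟩ : S)

/-- The homogeneous elements of `R'` are the fractions of a homogeneous polynomial by a nonzero
homogeneous constant. -/
lemma homog_iff
    (hS : ∀ x : R[X], x ∈ S ↔ ∃ r : R, Homog 𝒜 r ∧ r ≠ 0 ∧ x = C r)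
    (hℬ : LocGrading (polyGrading 𝒜 w) S R' ℬ) {x : R'} :
    Homog ℬ x ↔ ∃ (p : R[X]) (a : R), Homog (polyGrading 𝒜 w) p ∧ Homog 𝒜 a ∧ a ≠ 0 ∧
      x * algebraMap R[X] R' (C a) = algebraMap R[X] R' p := by
  constructor
  · rintro ⟨d, hd⟩
    obtain ⟨r, s, v, hs, -, hr, h⟩ := (hℬ d x).1 hd
    obtain ⟨a, ha, ha0, rfl⟩ := (hS s).1 hs
    exact ⟨r, a, ⟨_, hr⟩, ha, ha0, h⟩
  · rintro ⟨p, a, ⟨d, hd⟩, ⟨v, hv⟩, ha0, h⟩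
    refine ⟨d - v, (hℬ _ _).2 ⟨p, C a, v, (hS _).2 ⟨a, ⟨v, hv⟩, ha0, rfl⟩, C_mem hv, ?_, h⟩⟩
    rwa [add_sub_cancel]

/-- Every ideal of `R'` containing a nonzero homogeneous element contains a homogeneous element
dividing, with homogeneous quotient, all homogeneous elements of the ideal. -/
lemma exists_homog_generator (hzd : NoHomogZeroDivisors 𝒜)
    (hS : ∀ x : R[X], x ∈ S ↔ ∃ r : R, Homog 𝒜 r ∧ r ≠ 0 ∧ x = C r)
    (hℬ : LocGrading (polyGrading 𝒜 w) S R' ℬ) (J : Ideal R') {x : R'} (hxJ : x ∈ J)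
    (hx : Homog ℬ x) (hx0 : x ≠ 0) :
    ∃ d ∈ J, Homog ℬ d ∧ ∀ y ∈ J, Homog ℬ y → ∃ e, Homog ℬ e ∧ y = d * e := by
  classical
  have hex : ∃ (n : ℕ) (p : R[X]), Homog (polyGrading 𝒜 w) p ∧ p ≠ 0 ∧
      algebraMap R[X] R' p ∈ J ∧ p.natDegree = n := by
    obtain ⟨p, a, hp, ha, ha0, h⟩ := (homog_iff hS hℬ).1 hx
    refine ⟨_, p, hp, ?_, h ▸ J.mul_mem_right _ hxJ, rfl⟩
    rintro rfl
    rw [map_zero] at h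
    exact hx0 ((isUnit_const hS ha ha0).mul_left_eq_zero.1 h)
  obtain ⟨p, ⟨d₁, hp⟩, hp0, hpJ, hpn⟩ := Nat.find_spec hex
  have h1 : (1 : R) ≠ 0 := by
    intro h
    exact hp0 (by rw [← one_mul p, ← C_1, h, C_0, zero_mul])
  refine ⟨algebraMap R[X] R' p, hpJ, (homog_iff hS hℬ).2
    ⟨p, 1, ⟨d₁, hp⟩, ⟨0, SetLike.GradedOne.one_mem⟩, h1, by simp⟩, ?_⟩
  intro y hyJ hy
  obtain ⟨g, a, ⟨d, hg⟩, ha, ha0, h⟩ := (homog_iff hS hℬ).1 hy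
  obtain ⟨e, c, q, r, hc, hc0, hq, hr, heq, hrd⟩ := exists_pseudo_division hzd hp hp0
    (g.natDegree + 1) d g hg
    (degree_le_natDegree.trans_lt (by exact_mod_cast Nat.lt_succ_self _))
  have hφ := congrArg (algebraMap R[X] R') heq
  simp only [map_mul, map_add] at hφ
  have hrJ : algebraMap R[X] R' r ∈ J := by
    have h2 : algebraMap R[X] R' r = algebraMap R[X] R' (C c) * algebraMap R[X] R' (C a) * y
        - algebraMap R[X] R' q * algebraMap R[X] R' p := by
      linear_combination (-1 : R') * hφ - algebraMap R[X] R' (C c) * h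
    rw [h2]
    exact sub_mem (J.mul_mem_left _ hyJ) (J.mul_mem_left _ hpJ)
  have hr0 : r = 0 := by
    by_contra hr0
    have hmin := Nat.find_min' hex ⟨r, ⟨_, hr⟩, hr0, hrJ, rfl⟩
    rw [← hpn] at hmin
    exact absurd (natDegree_lt_natDegree hr0 hrd) (not_lt.2 hmin)
  rw [hr0, map_zero, add_zero] at hφ
  have hca : Homog 𝒜 (c * a) := homog_mul ⟨_, hc⟩ ha
  have hca0 : c * a ≠ 0 := hzd _ _ ⟨_, hc⟩ ha hc0 ha0
  obtain ⟨u, hu⟩ := isUnit_const (R' := R') hS hca hca0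
  refine ⟨algebraMap R[X] R' q * ↑u⁻¹, (homog_iff hS hℬ).2
    ⟨q, c * a, ⟨_, hq⟩, hca, hca0, ?_⟩, ?_⟩
  · rw [← hu, mul_assoc, Units.inv_mul, mul_one]
  · have h3 : y * u = algebraMap R[X] R' p * algebraMap R[X] R' q := by
      rw [hu, C_mul, map_mul]
      linear_combination hφ + algebraMap R[X] R' (C c) * h
    rw [← mul_assoc, ← h3, mul_assoc, Units.mul_inv, mul_one]

lemma kprime_of_kirreducible (hzd : NoHomogZeroDivisors 𝒜)
    (hS : ∀ x : R[X], x ∈ S ↔ ∃ r : R, Homog 𝒜 r ∧ r ≠ 0 ∧ x = C r)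
    (hℬ : LocGrading (polyGrading 𝒜 w) S R' ℬ) {x : R'} (hx : KIrreducible ℬ x) :
    KPrime ℬ x := by
  obtain ⟨hx0, hxu, hxh, hirr⟩ := hx
  refine ⟨hx0, hxu, hxh, fun g h hg _ hdvd => ?_⟩
  obtain ⟨d, hdJ, hdh, hgen⟩ := exists_homog_generator hzd hS hℬ (Ideal.span {x, g})
    (Ideal.subset_span (by simp)) hxh hx0
  obtain ⟨e, he, hxe⟩ := hgen x (Ideal.subset_span (by simp)) hxh
  obtain ⟨e', -, hge⟩ := hgen g (Ideal.subset_span (by simp)) hg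
  rcases hirr d e hdh he hxe with hu | hu
  · -- A Bézout combination of `x` and `g` is a unit, so `x` divides `d * h`, hence `h`.
    right
    obtain ⟨a, b, hab⟩ := Ideal.mem_span_pair.1 hdJ
    have h1 : x ∣ d * h := by
      rw [← hab, add_mul]
      refine dvd_add ⟨a * h, by ring⟩ ?_
      rw [mul_assoc]
      exact hdvd.mul_left b
    exact hu.dvd_mul_left.1 h1
  · left
    rw [hxe, hge]
    exact hu.mul_right_dvd.2 (dvd_mul_right _ _)

/-- The degree in `T` of a numerator `p` of `x` bounds the number of steps needed to factor `x`. -/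
lemma exists_factorization (hzd : NoHomogZeroDivisors 𝒜)
    (hS : ∀ x : R[X], x ∈ S ↔ ∃ r : R, Homog 𝒜 r ∧ r ≠ 0 ∧ x = C r)
    (hℬ : LocGrading (polyGrading 𝒜 w) S R' ℬ) (N : ℕ) :
    ∀ (x : R') (p : R[X]) (a : R), Homog (polyGrading 𝒜 w) p → Homog 𝒜 a → a ≠ 0 →
      x * algebraMap R[X] R' (C a) = algebraMap R[X] R' p → x ≠ 0 → ¬IsUnit x →
      p.natDegree < N → ∃ l : Multiset R', (∀ q ∈ l, KPrime ℬ q) ∧ l.prod = x := by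
  induction N with
  | zero => intro x p a _ _ _ _ _ _ h; exact absurd h (Nat.not_lt_zero _)
  | succ N ih =>
    intro x p a hp ha ha0 h hx0 hxu hN
    have hxh : Homog ℬ x := (homog_iff hS hℬ).2 ⟨p, a, hp, ha, ha0, h⟩
    by_cases hirr : KIrreducible ℬ x
    · exact ⟨{x}, by simpa using kprime_of_kirreducible hzd hS hℬ hirr, by simp⟩
    obtain ⟨y, z, hy, hz, hxyz, hyu, hzu⟩ : ∃ y z, Homog ℬ y ∧ Homog ℬ z ∧ x = y * z ∧
        ¬IsUnit y ∧ ¬IsUnit z := by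
      by_contra hcon
      refine hirr ⟨hx0, hxu, hxh, fun y z hy hz hyz => ?_⟩
      by_contra hno
      rw [not_or] at hno
      exact hcon ⟨y, z, hy, hz, hyz, hno.1, hno.2⟩
    have hy0 : y ≠ 0 := by rintro rfl; exact hx0 (by simpa using hxyz)
    have hz0 : z ≠ 0 := by rintro rfl; exact hx0 (by simpa using hxyz)
    obtain ⟨p₁, a₁, hp₁, ha₁, ha₁0, h₁⟩ := (homog_iff hS hℬ).1 hy
    obtain ⟨p₂, a₂, hp₂, ha₂, ha₂0, h₂⟩ := (homog_iff hS hℬ).1 hz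
    -- A nonzero numerator of degree zero is a nonzero homogeneous constant, hence a unit of `R'`.
    have numerator : ∀ (t : R') (q : R[X]) (b : R), Homog (polyGrading 𝒜 w) q → Homog 𝒜 b →
        b ≠ 0 → t * algebraMap R[X] R' (C b) = algebraMap R[X] R' q → t ≠ 0 → ¬IsUnit t →
        q ≠ 0 ∧ 0 < q.natDegree := by
      intro t q b hq hb hb0 ht ht0 htu
      have hq0 : q ≠ 0 := by
        rintro rfl
        rw [map_zero] at ht
        exact ht0 ((isUnit_const hS hb hb0).mul_left_eq_zero.1 ht)
      refine ⟨hq0, Nat.pos_of_ne_zero fun hdeg => htu ?_⟩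
      have hlc := homog_leadingCoeff hq
      have hqC : q = C q.leadingCoeff := by
        rw [leadingCoeff, hdeg]; exact eq_C_of_natDegree_eq_zero hdeg
      have hu := isUnit_const (R' := R') hS hlc (leadingCoeff_ne_zero.2 hq0)
      rw [← hqC, ← ht] at hu
      exact isUnit_of_mul_isUnit_left hu
    obtain ⟨hp₁0, hd₁⟩ := numerator y p₁ a₁ hp₁ ha₁ ha₁0 h₁ hy0 hyu
    obtain ⟨hp₂0, hd₂⟩ := numerator z p₂ a₂ hp₂ ha₂ ha₂0 h₂ hz0 hzu
    obtain ⟨hp0, -⟩ := numerator x p a hp ha ha0 h hx0 hxu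
    have heq : C a * (p₁ * p₂) = C (a₁ * a₂) * p := by
      apply algebraMap_inj (R' := R') hzd hS
      simp only [map_mul]
      rw [← h, ← h₁, ← h₂, hxyz]
      ring
    have haa := homog_mul ha₁ ha₂
    have haa0 := hzd _ _ ha₁ ha₂ ha₁0 ha₂0
    have constHomog : ∀ b, Homog 𝒜 b → Homog (polyGrading 𝒜 w) (C b) :=
      fun b ⟨v, hv⟩ => ⟨v, C_mem hv⟩
    have hdeg : p₁.natDegree + p₂.natDegree = p.natDegree := by
      have h3 := congrArg natDegree heq
      rw [natDegree_mul' (leadingCoeff_mul_ne_zero hzd (constHomog a ha) (by simpa using ha0)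
          (poly_mul_ne_zero hzd hp₁ hp₁0 hp₂0)),
        natDegree_mul' (leadingCoeff_mul_ne_zero hzd (constHomog _ haa) (C_ne_zero.2 haa0) hp0),
        natDegree_mul' (leadingCoeff_mul_ne_zero hzd hp₁ hp₁0 hp₂0), natDegree_C,
        natDegree_C] at h3
      omega
    obtain ⟨l₁, hl₁, hl₁p⟩ := ih y p₁ a₁ hp₁ ha₁ ha₁0 h₁ hy0 hyu (by omega)
    obtain ⟨l₂, hl₂, hl₂p⟩ := ih z p₂ a₂ hp₂ ha₂ ha₂0 h₂ hz0 hzu (by omega)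
    refine ⟨l₁ + l₂, fun q hq => ?_, by rw [Multiset.prod_add, hl₁p, hl₂p, hxyz]⟩
    rcases Multiset.mem_add.1 hq with hq | hq
    · exact hl₁ q hq
    · exact hl₂ q hq

end Localized

/-- Corollary 3.4. Let `R` be `K`-graded without homogeneous zero
divisors, grade `R[T]` by assigning to `T` the degree `w`, and let `S` be the multiplicative
system of (constant polynomials given by) all nonzero homogeneous elements of `R`. Then the
graded localization `S⁻¹(R[T])` is factorially `K`-graded. -/
theorem statement_16 {K R : Type*} [AddCommGroup K] [DecidableEq K] [CommRing R]
    (𝒜 : K → AddSubgroup R) [GradedRing 𝒜]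
    (hzd : NoHomogZeroDivisors 𝒜) (w : K)
    (S : Submonoid (Polynomial R))
    (hS : ∀ x : Polynomial R, x ∈ S ↔ ∃ r : R, Homog 𝒜 r ∧ r ≠ 0 ∧ x = Polynomial.C r)
    (R' : Type*) [CommRing R'] [Algebra (Polynomial R) R'] [IsLocalization S R']
    (ℬ : K → AddSubgroup R') (hℬ : LocGrading (polyGrading 𝒜 w) S R' ℬ) :
    FactoriallyGraded ℬ := by
  intro f hf hf0 hfu
  obtain ⟨p, a, hp, ha, ha0, h⟩ := (homog_iff hS hℬ).1 hf
  exact exists_factorization hzd hS hℬ (p.natDegree + 1) f p a hp ha ha0 h hf0 hfu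
    (Nat.lt_succ_self _)
end

section
/- Let K be an abelian group, R a commutative factorially K-graded ring without K-homogeneous zero divisors, P a set of K-prime elements of R such that every K-prime element of R is associated (equal up to multiplication by a unit) to exactly one element of P, and R' = (R⁺ \ {0})^{-1}R the localization of R at all nonzero K-homogeneous elements, with R'[T] carrying the K-grading extending that of R' obtained by assigning to T a degree w ∈ K. For a nonzero K-homogeneous polynomial f ∈ R'[T] and p ∈ P, let ν_p(f) ∈ ℤ be the minimum over the nonzero coefficients c of f of the exponent of p in the (unique) representation of c as a homogeneous unit of R' times a product of integer powers of elements of P. Then for all nonzero K-homogeneous f, g ∈ R'[T] and all p ∈ P, ν_p(f·g) = ν_p(f) + ν_p(g). -/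
namespace GradedGauss

set_option linter.unusedSectionVars false

/-! ### Homogeneous elements of the graded ring -/

section Ring

variable {K R : Type*} [AddCommGroup K] [CommRing R] {𝒜 : K → AddSubgroup R}

/-- Homogeneous and not divisible by `p`. -/
def Free (𝒜 : K → AddSubgroup R) (p x : R) : Prop :=
  Homog 𝒜 x ∧ ¬ p ∣ x

theorem Free.mul [SetLike.GradedMonoid 𝒜] {p x y : R} (hp : KPrime 𝒜 p)
    (hx : Free 𝒜 p x) (hy : Free 𝒜 p y) : Free 𝒜 p (x * y) := by
  obtain ⟨⟨i, hi⟩, hx'⟩ := hx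
  obtain ⟨⟨j, hj⟩, hy'⟩ := hy
  refine ⟨⟨i + j, SetLike.mul_mem_graded hi hj⟩, fun h => ?_⟩
  exact (hp.2.2.2 x y ⟨i, hi⟩ ⟨j, hj⟩ h).elim hx' hy'

theorem free_of_isUnit {p u : R} (hp : KPrime 𝒜 p) (hu : IsUnit u) (h : Homog 𝒜 u) :
    Free 𝒜 p u :=
  ⟨h, fun hd => hp.2.1 (isUnit_of_dvd_unit hd hu)⟩

variable [DecidableEq K] [GradedRing 𝒜]

theorem free_one {p : R} (hp : KPrime 𝒜 p) : Free 𝒜 p 1 :=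
  free_of_isUnit hp isUnit_one ⟨0, SetLike.one_mem_graded 𝒜⟩

theorem mem_nonZeroDivisors (hzd : NoHomogZeroDivisors 𝒜) {s : R} (hs : Homog 𝒜 s)
    (h0 : s ≠ 0) : s ∈ nonZeroDivisors R := by
  rw [mem_nonZeroDivisors_iff_right]
  intro r hr
  obtain ⟨i, hi⟩ := hs
  have key : ∀ j, (DirectSum.decompose 𝒜 r j : R) = 0 := by
    intro j
    by_contra hj
    refine hzd s _ ⟨i, hi⟩ ⟨j, SetLike.coe_mem _⟩ h0 hj ?_
    rw [← DirectSum.coe_decompose_mul_add_of_left_mem 𝒜 hi, mul_comm, hr]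
    simp
  apply (DirectSum.decompose 𝒜).injective
  ext j
  simp [key j]

/-- The cofactor in a divisibility of homogeneous elements may be taken homogeneous. -/
theorem exists_homog_cofactor {p q : R} (hp : Homog 𝒜 p) (hq : Homog 𝒜 q) (h : p ∣ q) :
    ∃ c, Homog 𝒜 c ∧ q = p * c := by
  obtain ⟨c, rfl⟩ := h
  obtain ⟨i, hi⟩ := hp
  obtain ⟨j, hj⟩ := hq
  refine ⟨_, ⟨j - i, SetLike.coe_mem (DirectSum.decompose 𝒜 c (j - i))⟩, ?_⟩
  rw [← DirectSum.coe_decompose_mul_add_of_left_mem 𝒜 hi, add_sub_cancel,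
    DirectSum.decompose_of_mem_same 𝒜 hj]

theorem associated_of_dvd (hzd : NoHomogZeroDivisors 𝒜) {p q : R} (hp : KPrime 𝒜 p)
    (hq : KPrime 𝒜 q) (h : p ∣ q) : Associated p q := by
  obtain ⟨c, hc, hqc⟩ := exists_homog_cofactor hp.2.2.1 hq.2.2.1 h
  have hnz := mem_nonZeroDivisors hzd hq.2.2.1 hq.1
  rcases hq.2.2.2 p c hp.2.2.1 hc (hqc ▸ dvd_rfl) with ⟨d, hd⟩ | ⟨e, he⟩
  · have h1 : d * c = 1 := by
      apply (mul_cancel_left_mem_nonZeroDivisors hnz).1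
      rw [← mul_assoc, ← hd, ← hqc, mul_one]
    exact ⟨Units.mkOfMulEqOne c d (by rw [mul_comm, h1]), hqc.symm⟩
  · exfalso
    have h1 : p * e = 1 := by
      apply (mul_cancel_left_mem_nonZeroDivisors hnz).1
      rw [mul_one]
      calc q * (p * e) = p * (q * e) := by ring
        _ = q := by rw [← he, ← hqc]
    exact hp.2.1 (IsUnit.of_mul_eq_one e h1)

/-- A product of powers of members of `P` is a `p`-free element times the visible power of `p`. -/
theorem exists_free_prod (hzd : NoHomogZeroDivisors 𝒜) {P : Set R}
    (hP : ∀ p ∈ P, KPrime 𝒜 p)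
    (hPall : ∀ q : R, KPrime 𝒜 q → ∃! p, p ∈ P ∧ Associated p q)
    {p : R} (hp : p ∈ P) (a : R →₀ ℕ) (ha : (↑a.support : Set R) ⊆ P) :
    ∃ x, Free 𝒜 p x ∧ (a.prod fun q n => q ^ n) = x * p ^ a p := by
  classical
  refine ⟨(a.erase p).prod fun q n => q ^ n, ?_, ?_⟩
  · refine Finset.prod_induction _ (Free 𝒜 p) (fun _ _ => Free.mul (hP p hp))
      (free_one (hP p hp)) fun q hq => ?_
    rw [Finsupp.support_erase, Finset.mem_erase] at hq
    have hqP := ha hq.2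
    have hfree : Free 𝒜 p q := by
      refine ⟨(hP q hqP).2.2.1, fun hd => hq.1 ?_⟩
      exact (hPall q (hP q hqP)).unique ⟨hqP, Associated.refl q⟩
        ⟨hp, associated_of_dvd hzd (hP p hp) (hP q hqP) hd⟩
    induction (a.erase p) q with
    | zero => simpa using free_one (hP p hp)
    | succ n ih =>
      change Free 𝒜 p (q ^ (n + 1))
      rw [pow_succ]
      exact Free.mul (hP p hp) ih hfree
  · rw [mul_comm, Finsupp.mul_prod_erase' a p _ (by simp)]

end Ring

/-! ### The `p`-adic filtration of the localization -/

section Loc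

variable {K R R' : Type*} [AddCommGroup K] [CommRing R] [CommRing R'] [Algebra R R']
  {π : R'ˣ} {p : R} {𝒜 : K → AddSubgroup R}

/-- `c` has `p`-adic order at least `n`. The numerator `x` is any element of `R`, homogeneous or
not, which makes this condition closed under addition. -/
def OrdGE (𝒜 : K → AddSubgroup R) (p : R) (π : R'ˣ) (n : ℤ) (c : R') : Prop :=
  ∃ x y, Free 𝒜 p y ∧
    c * algebraMap R R' y = algebraMap R R' x * ((π ^ n : R'ˣ) : R')

theorem OrdGE.neg {n : ℤ} {c : R'} (h : OrdGE 𝒜 p π n c) : OrdGE 𝒜 p π n (-c) := by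
  obtain ⟨x, y, hy, h⟩ := h
  exact ⟨-x, y, hy, by rw [neg_mul, h, map_neg, neg_mul]⟩

/-- `c` has `p`-adic order exactly `n`: up to a factor `π ^ n`, it is a quotient of homogeneous
elements not divisible by `p`. -/
def OrdEq (𝒜 : K → AddSubgroup R) (p : R) (π : R'ˣ) (n : ℤ) (c : R') : Prop :=
  ∃ x y, Free 𝒜 p x ∧ Free 𝒜 p y ∧
    c * algebraMap R R' y = algebraMap R R' x * ((π ^ n : R'ˣ) : R')

theorem OrdEq.ordGE {n : ℤ} {c : R'} (h : OrdEq 𝒜 p π n c) : OrdGE 𝒜 p π n c := by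
  obtain ⟨x, y, -, hy, h⟩ := h
  exact ⟨x, y, hy, h⟩

theorem OrdGE.add [SetLike.GradedMonoid 𝒜] (hp : KPrime 𝒜 p) {n : ℤ} {c d : R'}
    (hc : OrdGE 𝒜 p π n c) (hd : OrdGE 𝒜 p π n d) : OrdGE 𝒜 p π n (c + d) := by
  obtain ⟨x, y, hy, h⟩ := hc
  obtain ⟨x', y', hy', h'⟩ := hd
  refine ⟨x * y' + x' * y, y * y', hy.mul hp hy', ?_⟩
  simp only [map_mul, map_add]
  linear_combination (algebraMap R R' y') * h + (algebraMap R R' y) * h'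

theorem OrdGE.mul [SetLike.GradedMonoid 𝒜] (hp : KPrime 𝒜 p) {m n : ℤ} {c d : R'}
    (hc : OrdGE 𝒜 p π m c) (hd : OrdGE 𝒜 p π n d) : OrdGE 𝒜 p π (m + n) (c * d) := by
  obtain ⟨x, y, hy, h⟩ := hc
  obtain ⟨x', y', hy', h'⟩ := hd
  refine ⟨x * x', y * y', hy.mul hp hy', ?_⟩
  rw [zpow_add, Units.val_mul, map_mul, map_mul, mul_mul_mul_comm, h, h', mul_mul_mul_comm]

theorem OrdEq.mul [SetLike.GradedMonoid 𝒜] (hp : KPrime 𝒜 p) {m n : ℤ} {c d : R'}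
    (hc : OrdEq 𝒜 p π m c) (hd : OrdEq 𝒜 p π n d) : OrdEq 𝒜 p π (m + n) (c * d) := by
  obtain ⟨x, y, hx, hy, h⟩ := hc
  obtain ⟨x', y', hx', hy', h'⟩ := hd
  refine ⟨x * x', y * y', hx.mul hp hx', hy.mul hp hy', ?_⟩
  rw [zpow_add, Units.val_mul, map_mul, map_mul, mul_mul_mul_comm, h, h', mul_mul_mul_comm]

theorem OrdGE.mono (hπ : (π : R') = algebraMap R R' p) {m n : ℤ} {c : R'} (hmn : m ≤ n)
    (h : OrdGE 𝒜 p π n c) : OrdGE 𝒜 p π m c := by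
  obtain ⟨x, y, hy, h⟩ := h
  obtain ⟨k, rfl⟩ := Int.le.dest hmn
  refine ⟨x * p ^ k, y, hy, ?_⟩
  rw [h, add_comm, zpow_add, Units.val_mul, zpow_natCast, Units.val_pow_eq_pow_val, hπ, map_mul,
    map_pow, mul_assoc]

theorem OrdEq.not_ordGE [SetLike.GradedMonoid 𝒜] (hp : KPrime 𝒜 p)
    (hinj : Function.Injective (algebraMap R R')) (hπ : (π : R') = algebraMap R R' p)
    {n : ℤ} {c : R'} (h : OrdEq 𝒜 p π n c) : ¬ OrdGE 𝒜 p π (n + 1) c := by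
  rintro ⟨x', y', hy', h'⟩
  obtain ⟨x, y, hx, hy, h⟩ := h
  refine (hx.mul hp hy').2 ⟨x' * y, hinj ?_⟩
  rw [zpow_add, zpow_one, Units.val_mul, hπ] at h'
  apply (π ^ n).isUnit.mul_left_cancel
  simp only [map_mul]
  linear_combination (algebraMap R R' y) * h' - (algebraMap R R' y') * h

variable [DecidableEq K] [GradedRing 𝒜]

theorem ordGE_zero (hp : KPrime 𝒜 p) (n : ℤ) : OrdGE 𝒜 p π n 0 :=
  ⟨0, 1, free_one hp, by simp⟩

theorem OrdGE.sum (hp : KPrime 𝒜 p) {n : ℤ} {ι : Type*} (s : Finset ι) (c : ι → R')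
    (h : ∀ i ∈ s, OrdGE 𝒜 p π n (c i)) : OrdGE 𝒜 p π n (∑ i ∈ s, c i) :=
  Finset.sum_induction _ (OrdGE 𝒜 p π n) (fun _ _ => OrdGE.add hp) (ordGE_zero hp n) h

/-- If `v` is the `p`-adic order on the nonzero coefficients of `h`, then the minimum of `v` over
these is `m` iff all coefficients have order at least `m` and not all have order at least
`m + 1`. -/
theorem inf_eq_iff (hp : KPrime 𝒜 p)
    (hinj : Function.Injective (algebraMap R R')) (hπ : (π : R') = algebraMap R R' p)
    (v : R' → ℤ) (h : Polynomial R')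
    (hv : ∀ i, h.coeff i ≠ 0 → OrdEq 𝒜 p π (v (h.coeff i)) (h.coeff i)) (m : ℤ) :
    h.support.inf (fun n => (v (h.coeff n) : WithTop ℤ)) = m ↔
      (∀ i, OrdGE 𝒜 p π m (h.coeff i)) ∧ ∃ i, ¬ OrdGE 𝒜 p π (m + 1) (h.coeff i) := by
  have hge : ∀ n : ℤ, (n : WithTop ℤ) ≤ h.support.inf (fun n => (v (h.coeff n) : WithTop ℤ)) ↔
      ∀ i, OrdGE 𝒜 p π n (h.coeff i) := by
    intro n
    rw [Finset.le_inf_iff]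
    refine forall_congr' fun i => ?_
    rw [Polynomial.mem_support_iff, WithTop.coe_le_coe]
    by_cases h0 : h.coeff i = 0
    · simp [h0, ordGE_zero hp]
    · refine ⟨fun hle => (hv i h0).ordGE.mono hπ (hle h0), fun hi _ => ?_⟩
      by_contra hlt
      exact (hv i h0).not_ordGE hp hinj hπ (hi.mono hπ (by omega))
  rw [← hge, ← not_forall, ← hge]
  generalize h.support.inf (fun n => (v (h.coeff n) : WithTop ℤ)) = t
  induction t using WithTop.recTopCoe with
  | top => simp
  | coe t =>
    simp only [WithTop.coe_le_coe, WithTop.coe_inj]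
    omega

end Loc

/-! ### Multiplicativity of the minimum -/

theorem homog_mul {K R' : Type*} [AddCommGroup K] [CommRing R'] {ℬ : K → AddSubgroup R'}
    (hmul : ∀ i j x y, x ∈ ℬ i → y ∈ ℬ j → x * y ∈ ℬ (i + j)) {w : K} {f g : Polynomial R'}
    (hf : Homog (polyGrading ℬ w) f) (hg : Homog (polyGrading ℬ w) g) :
    Homog (polyGrading ℬ w) (f * g) := by
  obtain ⟨d, hd⟩ := hf
  obtain ⟨e, he⟩ := hg
  refine ⟨d + e, fun n => ?_⟩
  rw [Polynomial.coeff_mul]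
  refine sum_mem fun x hx => ?_
  have hx' := Finset.HasAntidiagonal.mem_antidiagonal.1 hx
  have := hmul _ _ _ _ (hd x.1) (he x.2)
  rwa [sub_add_sub_comm, ← add_nsmul, hx'] at this

end GradedGauss

/-- Lemma 3.5, Gauß lemma. Let `R` be factorially `K`-graded without
homogeneous zero divisors, `P` a system of `K`-primes containing exactly one representative
of each class of associated `K`-primes, and `R' = (R⁺ \ {0})⁻¹R` the graded localization at
all nonzero homogeneous elements; grade `R'[T]` by assigning to `T` the degree `w`. For
`p ∈ P` and a nonzero homogeneous `c ∈ R'`, let `ν p c ∈ ℤ` be the exponent of `p` in the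
unique representation of `c` as a homogeneous unit (coming from `R`) times a product of
integer powers of elements of `P`; this is specified by `hν` (with the integer exponents
split into nonnegative parts `a` and `b`). Then for nonzero homogeneous `f, g ∈ R'[T]`,
the minimum of `ν p` over the nonzero coefficients satisfies
`ν_p(f·g) = ν_p(f) + ν_p(g)`. -/
theorem statement_17 {K R : Type*} [AddCommGroup K] [DecidableEq K] [CommRing R]
    (𝒜 : K → AddSubgroup R) [GradedRing 𝒜]
    (hzd : NoHomogZeroDivisors 𝒜) (hfact : FactoriallyGraded 𝒜)
    (P : Set R) (hP : ∀ p ∈ P, KPrime 𝒜 p)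
    (hPall : ∀ q : R, KPrime 𝒜 q → ∃! p, p ∈ P ∧ Associated p q)
    (S : Submonoid R) (hS : ∀ x : R, x ∈ S ↔ (Homog 𝒜 x ∧ x ≠ 0))
    (R' : Type*) [CommRing R'] [Algebra R R'] [IsLocalization S R']
    (ℬ : K → AddSubgroup R') (hℬ : LocGrading 𝒜 S R' ℬ)
    (w : K)
    (ν : R → R' → ℤ)
    (hν : ∀ c : R', Homog ℬ c → c ≠ 0 →
      ∃ (u : R) (a b : R →₀ ℕ), IsUnit u ∧ Homog 𝒜 u ∧
        (↑a.support ⊆ P) ∧ (↑b.support ⊆ P) ∧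
        (∀ p ∈ P, (a p : ℤ) - (b p : ℤ) = ν p c) ∧
        c * algebraMap R R' (b.prod fun p n => p ^ n) =
          algebraMap R R' (u * a.prod fun p n => p ^ n)) :
    ∀ p ∈ P, ∀ f g : Polynomial R',
      Homog (polyGrading ℬ w) f → Homog (polyGrading ℬ w) g → f ≠ 0 → g ≠ 0 →
        (f * g).support.inf (fun n => (ν p ((f * g).coeff n) : WithTop ℤ)) =
          f.support.inf (fun n => (ν p (f.coeff n) : WithTop ℤ)) +
            g.support.inf (fun n => (ν p (g.coeff n) : WithTop ℤ)) := by
  classical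
  intro p hpP f g hf hg hf0 hg0
  have hp := hP p hpP
  have hSnz : S ≤ nonZeroDivisors R := fun s hs =>
    GradedGauss.mem_nonZeroDivisors hzd ((hS s).1 hs).1 ((hS s).1 hs).2
  have hinj : Function.Injective (algebraMap R R') := IsLocalization.injective R' hSnz
  obtain ⟨π, hπ⟩ : IsUnit (algebraMap R R' p) :=
    IsLocalization.map_units R' (⟨p, (hS p).2 ⟨hp.2.2.1, hp.1⟩⟩ : S)
  have hord : ∀ c : R', Homog ℬ c → c ≠ 0 → GradedGauss.OrdEq 𝒜 p π (ν p c) c := by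
    intro c hc hc0
    obtain ⟨u, a, b, hu, huh, ha, hb, hab, h⟩ := hν c hc hc0
    obtain ⟨x, hx, hxa⟩ := GradedGauss.exists_free_prod hzd hP hPall hpP a ha
    obtain ⟨y, hy, hyb⟩ := GradedGauss.exists_free_prod hzd hP hPall hpP b hb
    refine ⟨u * x, y, (GradedGauss.free_of_isUnit hp hu huh).mul hp hx, hy, ?_⟩
    rw [hxa, hyb] at h
    rw [← hab p hpP]
    apply (π ^ (b p : ℤ)).isUnit.mul_right_cancel
    rw [mul_assoc _ _ ((π ^ (b p : ℤ) : R'ˣ) : R'), mul_assoc _ _ ((π ^ (b p : ℤ) : R'ˣ) : R'),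
      ← Units.val_mul (π ^ ((a p : ℤ) - b p)), ← zpow_add, sub_add_cancel]
    simpa [hπ, mul_assoc] using h
  have hmul : ∀ i j x y, x ∈ ℬ i → y ∈ ℬ j → x * y ∈ ℬ (i + j) := by
    intro i j x y hx hy
    obtain ⟨r, s, v, hs, hsv, hr, h⟩ := (hℬ i x).1 hx
    obtain ⟨r', s', v', hs', hsv', hr', h'⟩ := (hℬ j y).1 hy
    refine (hℬ _ _).2 ⟨r * r', s * s', v + v', S.mul_mem hs hs',
      SetLike.mul_mem_graded hsv hsv', ?_, ?_⟩
    · rw [add_add_add_comm]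
      exact SetLike.mul_mem_graded hr hr'
    · rw [map_mul, map_mul, mul_mul_mul_comm, h, h']
  have hcoeff : ∀ h : Polynomial R', Homog (polyGrading ℬ w) h → ∀ i, h.coeff i ≠ 0 →
      GradedGauss.OrdEq 𝒜 p π (ν p (h.coeff i)) (h.coeff i) := by
    rintro h ⟨d, hd⟩ i hi
    exact hord _ ⟨_, hd i⟩ hi
  have hiff := fun h hh m =>
    GradedGauss.inf_eq_iff hp hinj hπ (ν p) h (hcoeff h hh) m
  have hfin : ∀ h : Polynomial R', h ≠ 0 → ∃ m : ℤ,
      h.support.inf (fun n => (ν p (h.coeff n) : WithTop ℤ)) = m := by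
    intro h h0
    obtain ⟨i, -, hi⟩ := Finset.exists_mem_eq_inf h.support
      (Polynomial.support_nonempty.2 h0) (fun n => (ν p (h.coeff n) : WithTop ℤ))
    exact ⟨_, hi⟩
  -- A coefficient of order at least `m` but not at least `m + 1` has order exactly `m`.
  have hexact : ∀ h : Polynomial R', Homog (polyGrading ℬ w) h → ∀ (m : ℤ) (i : ℕ),
      GradedGauss.OrdGE 𝒜 p π m (h.coeff i) → ¬ GradedGauss.OrdGE 𝒜 p π (m + 1) (h.coeff i) →
      GradedGauss.OrdEq 𝒜 p π m (h.coeff i) := by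
    intro h hh m i h1 h2
    have h0 : h.coeff i ≠ 0 := fun h0 => h2 (h0 ▸ GradedGauss.ordGE_zero hp _)
    have hE := hcoeff h hh i h0
    have hle : ν p (h.coeff i) ≤ m := by
      by_contra hlt
      exact h2 (hE.ordGE.mono hπ (by omega))
    have hge : m ≤ ν p (h.coeff i) := by
      by_contra hlt
      exact hE.not_ordGE hp hinj hπ (h1.mono hπ (by omega))
    rwa [le_antisymm hle hge] at hE
  obtain ⟨m, hm⟩ := hfin f hf0
  obtain ⟨n, hn⟩ := hfin g hg0
  rw [hm, hn, ← WithTop.coe_add, hiff _ (GradedGauss.homog_mul hmul hf hg)]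
  obtain ⟨hfm, hfe⟩ := (hiff f hf m).1 hm
  obtain ⟨hgn, hge⟩ := (hiff g hg n).1 hn
  refine ⟨fun i => ?_, Nat.find hfe + Nat.find hge, ?_⟩
  · rw [Polynomial.coeff_mul]
    exact GradedGauss.OrdGE.sum hp _ _ fun x _ => (hfm x.1).mul hp (hgn x.2)
  · have hlead := (hexact f hf m _ (hfm _) (Nat.find_spec hfe)).mul hp
      (hexact g hg n _ (hgn _) (Nat.find_spec hge))
    intro hsum
    refine hlead.not_ordGE hp hinj hπ ?_
    rw [Polynomial.coeff_mul, ← Finset.add_sum_erase _ _ (Finset.HasAntidiagonal.mem_antidiagonal.2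
      (rfl : (Nat.find hfe, Nat.find hge).1 + (Nat.find hfe, Nat.find hge).2 = _))] at hsum
    have hrest : GradedGauss.OrdGE 𝒜 p π (m + n + 1)
        (∑ x ∈ (Finset.HasAntidiagonal.antidiagonal (Nat.find hfe + Nat.find hge)).erase
          (Nat.find hfe, Nat.find hge), f.coeff x.1 * g.coeff x.2) := by
      refine GradedGauss.OrdGE.sum hp _ _ fun x hx => ?_
      rw [Finset.mem_erase, Finset.HasAntidiagonal.mem_antidiagonal] at hx
      have hlt : x.1 < Nat.find hfe ∨ x.2 < Nat.find hge := by
        by_contra hcon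
        exact hx.1 (Prod.ext (by simp only; omega) (by simp only; omega))
      rcases hlt with hlt | hlt
      · have := (not_not.1 (Nat.find_min hfe hlt)).mul hp (hgn x.2)
        rwa [add_right_comm] at this
      · have := (hfm x.1).mul hp (not_not.1 (Nat.find_min hge hlt))
        rwa [← add_assoc] at this
    have := hsum.add hp hrest.neg
    rwa [add_neg_cancel_right] at this
end

section
/- Let K be an abelian group, R a commutative factorially K-graded ring without K-homogeneous zero divisors, P a set of K-prime elements of R such that every K-prime element of R is associated to exactly one element of P, and R' = (R⁺ \ {0})^{-1}R the localization of R at all nonzero K-homogeneous elements, with R[T] ⊆ R'[T] carrying the K-grading obtained by assigning to T a degree w ∈ K. Let f ∈ R[T] be a K-homogeneous polynomial with ν_p(f) = 0 for all p ∈ P (i.e., no p ∈ P divides all coefficients of f). If f is K-prime in R'[T], then f is K-prime in R[T]. -/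
open Polynomial

section Descent

variable {K R : Type*} [AddCommGroup K] [DecidableEq K] [CommRing R]
  {𝒜 : K → AddSubgroup R} [GradedRing 𝒜]

/-- The `K`-prime property needs only one of the two factors to be homogeneous. -/
theorem KPrime.dvd_or_dvd_of_homog_left {p a b : R} (hp : KPrime 𝒜 p) (ha : Homog 𝒜 a)
    (h : p ∣ a * b) : p ∣ a ∨ p ∣ b := by
  classical
  obtain ⟨-, -, ⟨v, hv⟩, hprime⟩ := hp
  by_cases hpa : p ∣ a
  · exact Or.inl hpa
  right
  obtain ⟨i, hi⟩ := ha
  obtain ⟨c, hc⟩ := h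
  rw [← DirectSum.sum_support_decompose 𝒜 b]
  refine Finset.dvd_sum fun j _ => ?_
  -- The component of `a * b = p * c` in degree `i + j` is `a * b_j = p * c_(i + j - v)`.
  have key : a * (DirectSum.decompose 𝒜 b j : R)
      = p * (DirectSum.decompose 𝒜 c (i + j - v) : R) := by
    rw [← DirectSum.coe_decompose_mul_add_of_left_mem 𝒜 hi,
      ← DirectSum.coe_decompose_mul_add_of_left_mem 𝒜 hv, hc, add_sub_cancel]
  exact (hprime a _ ⟨i, hi⟩ ⟨j, SetLike.coe_mem _⟩ ⟨_, key⟩).resolve_left hpa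

theorem NoHomogZeroDivisors.isLeftRegular {s : R} (hzd : NoHomogZeroDivisors 𝒜)
    (hs : Homog 𝒜 s) (hs0 : s ≠ 0) : IsLeftRegular s := by
  classical
  rw [isLeftRegular_iff_right_eq_zero_of_mul]
  intro x hx
  obtain ⟨v, hv⟩ := hs
  rw [← DirectSum.sum_support_decompose 𝒜 x]
  refine Finset.sum_eq_zero fun j _ => ?_
  have key : s * (DirectSum.decompose 𝒜 x j : R) = 0 := by
    rw [← DirectSum.coe_decompose_mul_add_of_left_mem 𝒜 hv, hx]
    simp
  by_contra hne
  exact hzd s _ ⟨v, hv⟩ ⟨j, SetLike.coe_mem _⟩ hs0 hne key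

/-- Gauss's lemma: a `K`-prime dividing a product of polynomials, the first of which has homogeneous
coefficients, divides one of the factors. -/
theorem gauss_C_dvd {p : R} (hp : KPrime 𝒜 p) {f h : R[X]} (hf : ∀ n, Homog 𝒜 (f.coeff n))
    (hpf : ¬ C p ∣ f) (hd : C p ∣ f * h) : C p ∣ h := by
  classical
  by_contra hph
  simp only [C_dvd_iff_dvd_coeff, not_forall] at hpf hph hd
  -- At the sum of the least indices where `p` fails to divide, `p` divides every summand of the
  -- coefficient of `f * h` except one, hence also that one.
  set n := Nat.find hpf with hn
  set m := Nat.find hph with hm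
  have hmem : (n, m) ∈ Finset.HasAntidiagonal.antidiagonal (n + m) := by simp
  have hsum := hd (n + m)
  rw [coeff_mul, ← Finset.add_sum_erase _ _ hmem] at hsum
  have hrest : p ∣ ∑ x ∈ (Finset.HasAntidiagonal.antidiagonal (n + m)).erase (n, m),
      f.coeff x.1 * h.coeff x.2 := by
    refine Finset.dvd_sum fun x hx => ?_
    obtain ⟨i, j⟩ := x
    simp only [Finset.mem_erase, Finset.HasAntidiagonal.mem_antidiagonal, ne_eq, Prod.mk.injEq] at hx
    obtain ⟨hne, hij⟩ := hx
    rcases lt_or_ge i n with hi | hi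
    · exact Dvd.dvd.mul_right (not_not.mp (Nat.find_min hpf hi)) _
    · have hj : j < m := by omega
      exact Dvd.dvd.mul_left (not_not.mp (Nat.find_min hph hj)) _
  have hnm := (dvd_add_left hrest).mp hsum
  rcases hp.dvd_or_dvd_of_homog_left (hf n) hnm with h1 | h1
  · exact Nat.find_spec hpf h1
  · exact Nat.find_spec hph h1

theorem dvd_of_mul_eq_C_prod_mul (hzd : NoHomogZeroDivisors 𝒜) {f : R[X]}
    (hf : ∀ n, Homog 𝒜 (f.coeff n)) (hprim : ∀ p, KPrime 𝒜 p → ¬ C p ∣ f) (l : Multiset R)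
    (hl : ∀ p ∈ l, KPrime 𝒜 p) (h g : R[X]) (heq : f * h = C l.prod * g) : f ∣ g := by
  induction l using Multiset.induction_on generalizing h with
  | empty => exact ⟨h, by simpa using heq.symm⟩
  | cons p l ih =>
    have hp : KPrime 𝒜 p := hl p (Multiset.mem_cons_self p l)
    rw [Multiset.prod_cons, C_mul, mul_assoc] at heq
    obtain ⟨h', rfl⟩ := gauss_C_dvd hp hf (hprim p hp) ⟨_, heq⟩
    refine ih (fun q hq => hl q (Multiset.mem_cons_of_mem hq)) h' ?_
    have hreg := hzd.isLeftRegular hp.2.2.1 hp.1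
    ext n
    apply hreg
    have := congrArg (fun q : R[X] => q.coeff n) heq
    rw [mul_left_comm] at this
    simpa only [coeff_C_mul] using this

end Descent

/-- Lemma 3.5, supplement. Let `R` be factorially `K`-graded without
homogeneous zero divisors, `P` a system of `K`-primes containing exactly one representative
of each class of associated `K`-primes, and `R' = (R⁺ \ {0})⁻¹R` the graded localization at
all nonzero homogeneous elements; grade `R[T]` and `R'[T]` by assigning to `T` the degree
`w`. Let `f ∈ R[T]` be homogeneous with `ν_p(f) = 0` for all `p ∈ P`, i.e. no `p ∈ P`
divides all coefficients of `f`. If (the image of) `f` is `K`-prime in `R'[T]`, then `f`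
is `K`-prime in `R[T]`. -/
theorem statement_18 {K R : Type*} [AddCommGroup K] [DecidableEq K] [CommRing R]
    (𝒜 : K → AddSubgroup R) [GradedRing 𝒜]
    (hzd : NoHomogZeroDivisors 𝒜) (hfact : FactoriallyGraded 𝒜)
    (P : Set R) (hP : ∀ p ∈ P, KPrime 𝒜 p)
    (hPall : ∀ q : R, KPrime 𝒜 q → ∃! p, p ∈ P ∧ Associated p q)
    (S : Submonoid R) (hS : ∀ x : R, x ∈ S ↔ (Homog 𝒜 x ∧ x ≠ 0))
    (R' : Type*) [CommRing R'] [Algebra R R'] [IsLocalization S R']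
    (ℬ : K → AddSubgroup R') (hℬ : LocGrading 𝒜 S R' ℬ)
    (w : K) (f : Polynomial R)
    (hfhom : Homog (polyGrading 𝒜 w) f)
    (hν0 : ∀ p ∈ P, ∃ n : ℕ, ¬p ∣ f.coeff n)
    (hfprime : KPrime (polyGrading ℬ w) (f.map (algebraMap R R'))) :
    KPrime (polyGrading 𝒜 w) f := by
  have hfc : ∀ n, Homog 𝒜 (f.coeff n) := by
    obtain ⟨d, hd⟩ := hfhom
    exact fun n => ⟨_, hd n⟩
  have hprim : ∀ p, KPrime 𝒜 p → ¬ C p ∣ f := by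
    intro q hq hqf
    obtain ⟨p, ⟨hpP, hpq⟩, -⟩ := hPall q hq
    obtain ⟨n, hn⟩ := hν0 p hpP
    exact hn (hpq.dvd.trans ((C_dvd_iff_dvd_coeff q f).mp hqf n))
  have hSreg : S ≤ nonZeroDivisors R := by
    intro s hs
    obtain ⟨h1, h2⟩ := (hS s).mp hs
    exact (isLeftRegular_iff_isRegular.mp (hzd.isLeftRegular h1 h2)).mem_nonZeroDivisors
  have hinj : Function.Injective (algebraMap R R') := IsLocalization.injective R' hSreg
  have hdesc : ∀ g : R[X], f.map (algebraMap R R') ∣ g.map (algebraMap R R') → f ∣ g := by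
    rintro g ⟨q, hq⟩
    obtain ⟨s, hs, hb⟩ := IsLocalization.integerNormalization_spec S q
    set h := IsLocalization.integerNormalization S q
    have heq : f * h = C s * g := by
      apply map_injective _ hinj
      rw [Polynomial.map_mul, Polynomial.map_mul, hb, hq, map_C,
        algebra_compatible_smul R', smul_eq_C_mul]
      ring
    obtain ⟨hsh, hs0⟩ := (hS s).mp hs
    by_cases hu : IsUnit s
    · exact ((hu.map C).dvd_mul_left).mp ⟨h, heq.symm⟩
    · obtain ⟨l, hl, rfl⟩ := hfact s hsh hs0 hu
      exact dvd_of_mul_eq_C_prod_mul hzd hfc hprim l hl h g heq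
  have hhom : ∀ g : R[X], Homog (polyGrading 𝒜 w) g →
      Homog (polyGrading ℬ w) (g.map (algebraMap R R')) := by
    rintro g ⟨d, hd⟩
    refine ⟨d, fun n => ?_⟩
    rw [coeff_map, hℬ]
    exact ⟨g.coeff n, 1, 0, S.one_mem, SetLike.GradedOne.one_mem, by simpa using hd n, by simp⟩
  obtain ⟨hf0, hfu, -, hfp⟩ := hfprime
  refine ⟨?_, ?_, hfhom, ?_⟩
  · rintro rfl
    exact hf0 (Polynomial.map_zero _)
  · exact fun hu => hfu (hu.map (mapRingHom (algebraMap R R')))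
  · intro g h hg hh hd
    have := hfp _ _ (hhom g hg) (hhom h hh)
      (by rw [← Polynomial.map_mul]; exact Polynomial.map_dvd _ hd)
    exact this.imp (hdesc g) (hdesc h)
end

section
/- Let K be an abelian group, m a positive integer, and R a commutative ring graded by K ⊕ ℤ^m without (K ⊕ ℤ^m)-homogeneous zero divisors. Let f ∈ R be a (K ⊕ ℤ^m)-homogeneous element. Then f is (K ⊕ ℤ^m)-prime if and only if f is K-prime with respect to the coarsened K-grading whose component of degree w ∈ K is ⊕_{v∈ℤ^m} R_{(w,v)}. -/
lemma Homog.toCoarsen {K V R : Type*} [AddCommGroup K] [CommRing R]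
    {𝒜 : K × V → AddSubgroup R} {f : R} (hf : Homog 𝒜 f) : Homog (coarsen 𝒜) f := by
  obtain ⟨⟨w, v⟩, h⟩ := hf
  exact ⟨w, AddSubgroup.mem_iSup_of_mem (S := fun v => 𝒜 (w, v)) v h⟩

lemma exists_finsupp_of_mem_coarsen {K V R : Type*} [AddCommGroup K] [CommRing R]
    {𝒜 : K × V → AddSubgroup R} {w : K} {g : R} (hg : g ∈ coarsen 𝒜 w) :
    ∃ c : V →₀ R, (∀ v, c v ∈ 𝒜 (w, v)) ∧ c.sum (fun _ x => x) = g := by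
  classical
  refine AddSubgroup.iSup_induction (fun v => 𝒜 (w, v))
    (C := fun g => ∃ c : V →₀ R, (∀ v, c v ∈ 𝒜 (w, v)) ∧ c.sum (fun _ x => x) = g)
    hg ?_ ?_ ?_
  · intro v x hx
    refine ⟨Finsupp.single v x, fun u => ?_, by simp⟩
    by_cases huv : v = u
    · subst huv; simpa using hx
    · rw [Finsupp.single_eq_of_ne (Ne.symm huv)]; exact zero_mem _
  · exact ⟨0, fun v => zero_mem _, by simp⟩
  · rintro x y ⟨c, hc, rfl⟩ ⟨d, hd, rfl⟩
    exact ⟨c + d, fun v => add_mem (hc v) (hd v),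
      Finsupp.sum_add_index' (fun _ => rfl) (fun _ _ _ => rfl)⟩

/-- A coarsely homogeneous element not divisible by `f` is, modulo `f`, a nonempty sum of fine
components none of which is divisible by `f`. -/
lemma exists_truncation {K V R : Type*} [AddCommGroup K] [CommRing R]
    {𝒜 : K × V → AddSubgroup R} {w : K} {f g : R} (hg : g ∈ coarsen 𝒜 w) (hfg : ¬ f ∣ g) :
    ∃ (A : Finset V) (c : V → R), A.Nonempty ∧ (∀ v, c v ∈ 𝒜 (w, v)) ∧
      (∀ v ∈ A, ¬ f ∣ c v) ∧ f ∣ g - ∑ v ∈ A, c v := by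
  classical
  obtain ⟨c, hc, rfl⟩ := exists_finsupp_of_mem_coarsen hg
  have hdiff : f ∣ (c.sum fun _ x => x) - ∑ v ∈ c.support.filter (fun v => ¬ f ∣ c v), c v := by
    rw [Finsupp.sum, ← Finset.sum_filter_add_sum_filter_not c.support (fun v => f ∣ c v),
      add_sub_cancel_right]
    exact Finset.dvd_sum fun v hv => (Finset.mem_filter.1 hv).2
  refine ⟨_, c, ?_, hc, fun v hv => (Finset.mem_filter.1 hv).2, hdiff⟩
  rw [Finset.nonempty_iff_ne_empty]
  intro he
  rw [he, Finset.sum_empty, sub_zero] at hdiff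
  exact hfg hdiff

/-- The principal ideal generated by a homogeneous element is homogeneous. -/
lemma Homog.dvd_proj {ι R : Type*} [AddCommGroup ι] [DecidableEq ι] [CommRing R]
    (𝒜 : ι → AddSubgroup R) [GradedRing 𝒜] {f x : R} (hf : Homog 𝒜 f) (hx : f ∣ x) (i : ι) :
    f ∣ GradedRing.proj 𝒜 i x := by
  have hom : (Ideal.span {f}).IsHomogeneous 𝒜 := by
    apply Ideal.homogeneous_span
    rintro _ rfl
    exact hf
  have := hom i (Ideal.mem_span_singleton.2 hx)
  exact Ideal.mem_span_singleton.1 this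

/-- Proposition 4.1. Let `R` be graded by `K ⊕ ℤᵐ` (m ≥ 1) without
homogeneous zero divisors and let `f` be a `K ⊕ ℤᵐ`-homogeneous element. Then `f` is
`K ⊕ ℤᵐ`-prime iff `f` is `K`-prime with respect to the coarsened `K`-grading. -/
theorem statement_19 {K R : Type*} [AddCommGroup K] [DecidableEq K] [CommRing R]
    {m : ℕ} (hm : 0 < m)
    (𝒜 : K × (Fin m → ℤ) → AddSubgroup R) [GradedRing 𝒜]
    (hzd : NoHomogZeroDivisors 𝒜)
    (f : R) (hf : Homog 𝒜 f) :
    KPrime 𝒜 f ↔ KPrime (coarsen 𝒜) f := by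
  constructor
  · rintro ⟨h0, hu, -, hp⟩
    refine ⟨h0, hu, hf.toCoarsen, ?_⟩
    rintro g h ⟨w, hg⟩ ⟨w', hh⟩ hdvd
    by_contra! hcon
    obtain ⟨A, c, hA, hc, hcA, hgc⟩ := exists_truncation hg hcon.1
    obtain ⟨B, d, hB, hd, hdB, hhd⟩ := exists_truncation hh hcon.2
    obtain ⟨a, ha, b, hb, hab⟩ := UniqueSums.uniqueAdd_of_nonempty hA hB
    have hprod : f ∣ (∑ v ∈ A, c v) * ∑ v ∈ B, d v := by
      have h1 := dvd_sub (dvd_sub hdvd (hgc.mul_right h)) (hhd.mul_left (∑ v ∈ A, c v))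
      convert h1 using 1
      ring
    have hproj := hf.dvd_proj 𝒜 hprod (w + w', a + b)
    have hmem : ∀ u v, c u * d v ∈ 𝒜 (w + w', u + v) := fun u v =>
      SetLike.mul_mem_graded (hc u) (hd v)
    have hne : ∀ u ∈ A, ∀ v ∈ B, ¬ (u = a ∧ v = b) →
        GradedRing.proj 𝒜 (w + w', a + b) (c u * d v) = 0 := by
      intro u hu v hv huv
      rw [GradedRing.proj_apply]
      exact DirectSum.decompose_of_mem_ne 𝒜 (hmem u v)
        fun e => huv (hab hu hv (Prod.ext_iff.1 e).2)
    rw [Finset.sum_mul_sum, map_sum, Finset.sum_eq_single_of_mem a ha, map_sum,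
      Finset.sum_eq_single_of_mem b hb, GradedRing.proj_apply,
      DirectSum.decompose_of_mem_same 𝒜 (hmem a b)] at hproj
    · exact (hp _ _ ⟨_, hc a⟩ ⟨_, hd b⟩ hproj).elim (hcA a ha) (hdB b hb)
    · exact fun v hv hvb => hne a ha v hv fun e => hvb e.2
    · intro u hu hua
      rw [map_sum]
      exact Finset.sum_eq_zero fun v hv => hne u hu v hv fun e => hua e.1
  · rintro ⟨h0, hu, -, hp⟩
    exact ⟨h0, hu, hf, fun g h hg hh => hp g h hg.toCoarsen hh.toCoarsen⟩
end
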